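/- arXiv:0804.0991 — 2 statements merged into one kernel-verified Lean document; each statement's English description precedes it below -/
import Mathlib

section
/- For any h > 0, any w with 0 < w < 1, let a = a(w) = √((1 − w²)/(2h²w)) and b = b(w) = √((1 − w)/h²), and define the scaled damped Hermite functions H_n(x; a, b) = H_n(ax) e^{−b²x²/2}. Then for all x, y ∈ ℝ, K_{h²}(x,y) = (1/(√(2π) h)) Σ_{n=0}^∞ [w^n (1 − w²)^{1/2} / (2^n n!)] H_n(x; a, b) · H_n(y; a, b), the series converging absolutely. -/
open Real

/-- The physicists' Hermite polynomial `H_n(x) = (−1)^n e^{x²} (dⁿ/dxⁿ) e^{−x²}`. -/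
noncomputable def hermiteH (n : ℕ) (x : ℝ) : ℝ :=
  (-1) ^ n * Real.exp (x ^ 2) * iteratedDeriv n (fun t => Real.exp (-t ^ 2)) x

/-- The scaled, damped Hermite function `H_n(x; a, b) = H_n(ax) e^{−b²x²/2}`. -/
noncomputable def hermiteScaled (n : ℕ) (a b x : ℝ) : ℝ :=
  hermiteH n (a * x) * Real.exp (-b ^ 2 * x ^ 2 / 2)

/-!
The function `exp (-x²)` is the characteristic function of the Gaussian measure `γ = N(0, 2)`, so
differentiating under the integral writes `Hₙ(x) = (-i)ⁿ e^{x²} ∫ sⁿ e^{ixs} dγ(s)`. The series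
`∑ₙ (w/2)ⁿ/n! Hₙ(x) Hₙ(y)` thus becomes a double Gaussian integral in which the exponential series
sums to `exp (-wst/2)`; dominated convergence applies because `|w||st|/2 ≤ |w|(s² + t²)/4` and
`|w| < 1`. Evaluating the integral gives Mehler's formula, and the choice of `a` and `b` is exactly
the one that turns its exponent, together with the damping factors, into `-(x - y)²/(2h²)`.
-/

open MeasureTheory ProbabilityTheory Complex
open scoped NNReal Nat

theorem iteratedDeriv_continuousLinearMap_comp {𝕜 F G : Type*} [NontriviallyNormedField 𝕜]
    [NormedAddCommGroup F] [NormedSpace 𝕜 F] [NormedAddCommGroup G] [NormedSpace 𝕜 G]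
    (L : F →L[𝕜] G) {f : 𝕜 → F} {n : ℕ} {x : 𝕜} (hf : ContDiffAt 𝕜 n f x) :
    iteratedDeriv n (L ∘ f) x = L (iteratedDeriv n f x) := by
  rw [iteratedDeriv, L.iteratedFDeriv_comp_left hf le_rfl]
  rfl

theorem hasSum_iteratedDeriv_charFun_mul {μ ν : Measure ℝ} [IsFiniteMeasure μ]
    [IsFiniteMeasure ν] (hμ : ∀ n : ℕ, MemLp id n μ) (hν : ∀ n : ℕ, MemLp id n ν) {r : ℝ}
    (hr : Integrable (fun p : ℝ × ℝ ↦ rexp |r * (p.1 * p.2)|) (μ.prod ν)) (x y : ℝ) :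
    HasSum (fun n : ℕ ↦ (r ^ n / n ! : ℂ) *
        (iteratedDeriv n (charFun μ) x * iteratedDeriv n (charFun ν) y))
      (∫ p, cexp (-(r * (p.1 * p.2)) + (x * p.1 + y * p.2) * I) ∂μ.prod ν) := by
  set F : ℕ → ℝ × ℝ → ℂ := fun n p ↦
    (-(r * (p.1 * p.2))) ^ n / n ! * cexp ((x * p.1 + y * p.2) * I) with hF
  have hF_norm (n : ℕ) (p : ℝ × ℝ) : ‖F n p‖ = |r * (p.1 * p.2)| ^ n / n ! := by
    have hphase : ‖cexp ((x * p.1 + y * p.2) * I)‖ = 1 := by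
      exact_mod_cast norm_exp_ofReal_mul_I (x * p.1 + y * p.2)
    simp [hF, hphase]
  have hF_int (n : ℕ) : ∫ p, F n p ∂μ.prod ν =
      (r ^ n / n ! : ℂ) * (iteratedDeriv n (charFun μ) x * iteratedDeriv n (charFun ν) y) := by
    rw [iteratedDeriv_charFun (hμ n), iteratedDeriv_charFun (hν n), mul_mul_mul_comm,
      ← integral_prod_mul, ← mul_assoc, ← integral_const_mul]
    refine integral_congr_ae (.of_forall fun p ↦ ?_)
    simp only [hF, add_mul, Complex.exp_add, ← mul_pow, I_mul_I]
    ring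
  have hsum (p : ℝ × ℝ) := NormedSpace.expSeries_div_hasSum_exp |r * (p.1 * p.2)|
  rw [← Real.exp_eq_exp_ℝ] at hsum
  simp only [← hF_int]
  refine hasSum_integral_of_dominated_convergence (fun n p ↦ |r * (p.1 * p.2)| ^ n / n !)
    (fun n ↦ ?_) (fun n ↦ .of_forall fun p ↦ (hF_norm n p).le)
    (.of_forall fun p ↦ (hsum p).summable) ?_ (.of_forall fun p ↦ ?_)
  · exact Continuous.aestronglyMeasurable (by fun_prop)
  · simpa only [(hsum _).tsum_eq] using hr
  · have hexp := NormedSpace.expSeries_div_hasSum_exp (-(r * (p.1 * p.2)) : ℂ)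
    rw [← Complex.exp_eq_exp_ℂ] at hexp
    rw [Complex.exp_add]
    exact hexp.mul_right _

theorem integral_cexp_neg_mul_sq_add_mul {b : ℝ} (hb : 0 < b) (z : ℂ) :
    ∫ s : ℝ, cexp (-b * s ^ 2 + z * s) = √(π / b) * cexp (z ^ 2 / (4 * b)) := by
  have hsqrt : (π / b : ℂ) ^ (1 / 2 : ℂ) = √(π / b) := by
    rw [Real.sqrt_eq_rpow, ofReal_cpow (by positivity)]
    push_cast
    rfl
  have hquadratic := integral_cexp_quadratic (b := -b) (by simpa using hb) z 0
  simpa only [add_zero, neg_neg, hsqrt, zero_sub, mul_neg, div_neg] using hquadratic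

section Gaussian

variable {v : ℝ≥0}

theorem integrable_exp_mul_sq_gaussianReal {c : ℝ} (hc : 2 * c * v < 1) :
    Integrable (fun s ↦ rexp (c * s ^ 2)) (gaussianReal 0 v) := by
  rcases eq_or_ne v 0 with rfl | hv
  · simp [gaussianReal_zero_var, integrable_dirac]
  rw [gaussianReal_of_var_ne_zero _ hv, integrable_withDensity_iff_integrable_smul'
    (measurable_gaussianPDF _ _) (.of_forall fun _ ↦ gaussianPDF_lt_top)]
  have hpos : 0 < (1 - 2 * c * v) / (2 * v) := div_pos (by linarith) (by positivity)
  refine ((integrable_exp_neg_mul_sq hpos).const_mul (√(2 * π * v))⁻¹).congr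
    (.of_forall fun s ↦ ?_)
  simp only [toReal_gaussianPDF, gaussianPDFReal, smul_eq_mul, mul_assoc, ← Real.exp_add]
  congr 2
  field_simp
  ring

theorem integral_cexp_mul_sq_add_mul_gaussianReal {c : ℝ} (hc : 2 * c * v < 1) (z : ℂ) :
    ∫ s, cexp (c * s ^ 2 + z * s) ∂gaussianReal 0 v =
      (√(1 - 2 * c * v))⁻¹ * cexp (v * z ^ 2 / (2 * (1 - 2 * c * v : ℝ))) := by
  rcases eq_or_ne v 0 with rfl | hv
  · simp
  have hvc : (v : ℂ) ≠ 0 := by exact_mod_cast hv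
  set b : ℝ := (1 - 2 * c * v) / (2 * v) with hb
  have hb_pos : 0 < b := div_pos (sub_pos.2 hc) (by positivity)
  have hsqrt : (√(2 * π * v))⁻¹ * √(π / b) = (√(1 - 2 * c * v))⁻¹ := by
    rw [← Real.sqrt_inv, ← Real.sqrt_inv, ← Real.sqrt_mul (by positivity)]
    congr 1
    rw [hb]
    field_simp
  have hdensity (s : ℝ) : gaussianPDFReal 0 v s • cexp (c * s ^ 2 + z * s) =
      ((√(2 * π * v))⁻¹ : ℝ) * cexp (-b * s ^ 2 + z * s) := by
    simp only [gaussianPDFReal, real_smul, ofReal_mul, ofReal_exp, mul_assoc, ← Complex.exp_add]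
    push_cast [hb]
    congr 2
    field_simp
    ring
  rw [integral_gaussianReal_eq_integral_smul hv]
  simp only [hdensity]
  rw [integral_const_mul, integral_cexp_neg_mul_sq_add_mul hb_pos, ← mul_assoc, ← ofReal_mul,
    hsqrt, ofReal_inv]
  congr 2
  rw [hb]
  push_cast
  field_simp
  ring

theorem integrable_exp_abs_mul_gaussianReal_prod {r : ℝ} (hr : |r| * v < 1) :
    Integrable (fun p : ℝ × ℝ ↦ rexp |r * (p.1 * p.2)|)
      ((gaussianReal 0 v).prod (gaussianReal 0 v)) := by
  have hsq : Integrable (fun s ↦ rexp (|r| / 2 * s ^ 2)) (gaussianReal 0 v) :=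
    integrable_exp_mul_sq_gaussianReal (by linarith)
  refine (hsq.mul_prod hsq).mono' (by fun_prop) (.of_forall fun p ↦ ?_)
  rw [Real.norm_of_nonneg (by positivity), ← Real.exp_add, Real.exp_le_exp, abs_mul, abs_mul,
    ← mul_add, ← sq_abs p.1, ← sq_abs p.2]
  linarith [mul_le_mul_of_nonneg_left (two_mul_le_add_sq |p.1| |p.2|) (abs_nonneg r)]

theorem integrable_cexp_neg_mul_add_gaussianReal_prod {r : ℝ} (hr : |r| * v < 1) (x y : ℝ) :
    Integrable (fun p : ℝ × ℝ ↦ cexp (-(r * (p.1 * p.2)) + (x * p.1 + y * p.2) * I))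
      ((gaussianReal 0 v).prod (gaussianReal 0 v)) := by
  refine (integrable_exp_abs_mul_gaussianReal_prod hr).mono'
    (Continuous.aestronglyMeasurable (by fun_prop)) (.of_forall fun p ↦ ?_)
  rw [norm_exp, Real.exp_le_exp]
  simpa using neg_le_abs (r * (p.1 * p.2))

theorem integral_cexp_neg_mul_add_gaussianReal (r s x y : ℝ) :
    ∫ t, cexp (-(r * (s * t)) + (x * s + y * t) * I) ∂gaussianReal 0 v =
      cexp (-(v * y ^ 2) / 2) *
        cexp ((r ^ 2 * v / 2 : ℝ) * s ^ 2 + (x - r * v * y) * I * s) := by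
  calc ∫ t, cexp (-(r * (s * t)) + (x * s + y * t) * I) ∂gaussianReal 0 v
      = cexp (x * s * I) * complexMGF id (gaussianReal 0 v) (y * I - r * s) := by
        rw [complexMGF, ← integral_const_mul]
        refine integral_congr_ae (.of_forall fun t ↦ ?_)
        simp only [id, ← Complex.exp_add]
        congr 1
        ring
    _ = cexp (-(v * y ^ 2) / 2) *
          cexp ((r ^ 2 * v / 2 : ℝ) * s ^ 2 + (x - r * v * y) * I * s) := by
        rw [complexMGF_id_gaussianReal, ← Complex.exp_add, ← Complex.exp_add]
        congr 1
        push_cast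
        linear_combination (v * y ^ 2 / 2 : ℂ) * I_sq

theorem integral_cexp_neg_mul_add_gaussianReal_prod {r : ℝ} (hr : |r| * v < 1) (x y : ℝ) :
    ∫ p : ℝ × ℝ, cexp (-(r * (p.1 * p.2)) + (x * p.1 + y * p.2) * I)
        ∂(gaussianReal 0 v).prod (gaussianReal 0 v) =
      ((√(1 - (r * v) ^ 2))⁻¹ *
        rexp (-(v * (x ^ 2 + y ^ 2 - 2 * (r * v) * x * y)) / (2 * (1 - (r * v) ^ 2))) : ℝ) := by
  have hrv : (r * v) ^ 2 < 1 := by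
    rwa [sq_lt_one_iff_abs_lt_one, abs_mul, NNReal.abs_eq]
  have hvar : 2 * (r ^ 2 * v / 2) * v = (r * v) ^ 2 := by ring
  have hden : (1 - (r * v) ^ 2 : ℂ) ≠ 0 := by exact_mod_cast (sub_pos.2 hrv).ne'
  rw [integral_prod _ (integrable_cexp_neg_mul_add_gaussianReal_prod hr x y)]
  simp only [integral_cexp_neg_mul_add_gaussianReal]
  rw [integral_const_mul, integral_cexp_mul_sq_add_mul_gaussianReal (hvar.trans_lt hrv),
    mul_left_comm, ← Complex.exp_add, hvar, ofReal_mul, ofReal_exp]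
  congr 2
  push_cast
  rw [mul_pow _ I, I_sq]
  generalize hd : (1 - (r * v) ^ 2 : ℂ) = d at hden ⊢
  field_simp
  rw [← hd]
  ring

end Gaussian

theorem hasSum_iteratedDeriv_exp_neg_sq_mul {w : ℝ} (hw : |w| < 1) (x y : ℝ) :
    HasSum (fun n : ℕ ↦ (w / 2) ^ n / n ! *
        (iteratedDeriv n (fun t ↦ rexp (-t ^ 2)) x * iteratedDeriv n (fun t ↦ rexp (-t ^ 2)) y))
      ((√(1 - w ^ 2))⁻¹ * rexp (-(x ^ 2 + y ^ 2 - 2 * w * x * y) / (1 - w ^ 2))) := by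
  have hchar : charFun (gaussianReal 0 2) = ofRealCLM ∘ fun t ↦ rexp (-t ^ 2) := by
    funext t
    simp [charFun_gaussianReal]
  have hderiv (n : ℕ) (t : ℝ) : iteratedDeriv n (charFun (gaussianReal 0 2)) t =
      (iteratedDeriv n (fun t ↦ rexp (-t ^ 2)) t : ℝ) := by
    rw [hchar, iteratedDeriv_continuousLinearMap_comp ofRealCLM (by fun_prop), ofRealCLM_apply]
  have hmem (n : ℕ) : MemLp id n (gaussianReal 0 2) := by
    exact_mod_cast memLp_id_gaussianReal n
  have hw_half : |w / 2| * (2 : ℝ≥0) < 1 := by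
    simpa [abs_div] using hw
  have hscale : w / 2 * (2 : ℝ≥0) = w := by simp
  have h := hasSum_iteratedDeriv_charFun_mul hmem hmem
    (integrable_exp_abs_mul_gaussianReal_prod hw_half) x y
  rw [integral_cexp_neg_mul_add_gaussianReal_prod hw_half, hscale, NNReal.coe_ofNat, ← mul_neg,
    mul_div_mul_left _ _ two_ne_zero] at h
  simp only [hderiv] at h
  exact_mod_cast h

theorem hasSum_hermiteH_mul_hermiteH {w : ℝ} (hw : |w| < 1) (x y : ℝ) :
    HasSum (fun n : ℕ ↦ (w / 2) ^ n / n ! * (hermiteH n x * hermiteH n y))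
      ((√(1 - w ^ 2))⁻¹ *
        rexp ((2 * w * x * y - w ^ 2 * (x ^ 2 + y ^ 2)) / (1 - w ^ 2))) := by
  have hd : 1 - w ^ 2 ≠ 0 := (sub_pos.2 ((sq_lt_one_iff_abs_lt_one w).2 hw)).ne'
  have hsign (n : ℕ) : ((-1) ^ n * (-1) ^ n : ℝ) = 1 := by
    rw [← mul_pow, neg_one_mul, neg_neg, one_pow]
  convert! (hasSum_iteratedDeriv_exp_neg_sq_mul hw x y).mul_left (rexp (x ^ 2) * rexp (y ^ 2))
    using 1
  · funext n
    simp only [hermiteH]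
    linear_combination ((w / 2) ^ n / n ! * (rexp (x ^ 2) * rexp (y ^ 2)) *
      (iteratedDeriv n (fun t ↦ rexp (-t ^ 2)) x *
        iteratedDeriv n (fun t ↦ rexp (-t ^ 2)) y)) * hsign n
  · rw [mul_left_comm, ← Real.exp_add, ← Real.exp_add]
    congr 2
    field_simp
    ring

theorem hasSum_hermiteScaled_mul_hermiteScaled {w : ℝ} (hw : |w| < 1) (a b x y : ℝ) :
    HasSum (fun n : ℕ ↦ w ^ n * √(1 - w ^ 2) / (2 ^ n * n !) *
        (hermiteScaled n a b x * hermiteScaled n a b y))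
      (rexp (a ^ 2 * (2 * w * x * y - w ^ 2 * (x ^ 2 + y ^ 2)) / (1 - w ^ 2) -
        b ^ 2 * (x ^ 2 + y ^ 2) / 2)) := by
  have hsqrt : √(1 - w ^ 2) ≠ 0 :=
    (Real.sqrt_pos.2 (sub_pos.2 ((sq_lt_one_iff_abs_lt_one w).2 hw))).ne'
  convert! (hasSum_hermiteH_mul_hermiteH hw (a * x) (a * y)).mul_left
    (√(1 - w ^ 2) * (rexp (-b ^ 2 * x ^ 2 / 2) * rexp (-b ^ 2 * y ^ 2 / 2))) using 1
  · funext n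
    simp only [hermiteScaled, div_pow]
    ring
  · rw [mul_mul_mul_comm, mul_inv_cancel₀ hsqrt, one_mul, ← Real.exp_add, ← Real.exp_add]
    congr 1
    ring

/-- Mehler-type expansion of the normal kernel: for `h > 0`, `0 < w < 1`,
with `a = √((1−w²)/(2h²w))` and `b = √((1−w)/h²)`,
`K_{h²}(x,y) = (1/(√(2π)h)) Σ_n [wⁿ(1−w²)^{1/2}/(2ⁿ n!)] H_n(x;a,b) H_n(y;a,b)`,
the series converging absolutely. -/
theorem normal_kernel_mehler_expansion (h w : ℝ) (hh : 0 < h) (hw0 : 0 < w) (hw1 : w < 1)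
    (x y : ℝ) :
    (Summable fun n : ℕ =>
        |w ^ n * Real.sqrt (1 - w ^ 2) / (2 ^ n * n.factorial) *
          (hermiteScaled n (Real.sqrt ((1 - w ^ 2) / (2 * h ^ 2 * w)))
              (Real.sqrt ((1 - w) / h ^ 2)) x *
            hermiteScaled n (Real.sqrt ((1 - w ^ 2) / (2 * h ^ 2 * w)))
              (Real.sqrt ((1 - w) / h ^ 2)) y)|) ∧
    (Real.sqrt (2 * Real.pi * h ^ 2))⁻¹ * Real.exp (-(x - y) ^ 2 / (2 * h ^ 2))
      = (1 / (Real.sqrt (2 * Real.pi) * h)) *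
          ∑' n : ℕ,
            w ^ n * Real.sqrt (1 - w ^ 2) / (2 ^ n * n.factorial) *
              (hermiteScaled n (Real.sqrt ((1 - w ^ 2) / (2 * h ^ 2 * w)))
                  (Real.sqrt ((1 - w) / h ^ 2)) x *
                hermiteScaled n (Real.sqrt ((1 - w ^ 2) / (2 * h ^ 2 * w)))
                  (Real.sqrt ((1 - w) / h ^ 2)) y) := by
  have hw2 : 0 < 1 - w ^ 2 := by nlinarith
  have hexpansion := hasSum_hermiteScaled_mul_hermiteScaled (abs_lt.2 ⟨by linarith, hw1⟩)
    (√((1 - w ^ 2) / (2 * h ^ 2 * w))) (√((1 - w) / h ^ 2)) x y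
  have hexponent : (1 - w ^ 2) / (2 * h ^ 2 * w) * (2 * w * x * y - w ^ 2 * (x ^ 2 + y ^ 2)) /
      (1 - w ^ 2) - (1 - w) / h ^ 2 * (x ^ 2 + y ^ 2) / 2 = -(x - y) ^ 2 / (2 * h ^ 2) := by
    field_simp
    ring
  rw [Real.sq_sqrt (by positivity), Real.sq_sqrt (div_nonneg (by linarith) (by positivity)),
    hexponent] at hexpansion
  refine ⟨hexpansion.summable.abs, ?_⟩
  rw [hexpansion.tsum_eq, Real.sqrt_mul (by positivity), Real.sqrt_sq hh.le, one_div]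
end

section
/- Let h > 0, σ > 0, r = h²/σ², and w* = w*(r) = 1 − (1/2)[√(4r + r²) − r]. Set a = √((1 − w*²)/(2h²w*)), b = √((1 − w*)/h²), and γ*_n(x) = H_n(ax) e^{−b²x²/2} · √(aσ/(2^{n−1/2} n!)). Then the functions γ*_0, γ*_1, … are orthonormal in L²(N(0,σ²)) and, with β = w* and α = (1 − w*²)^{1/2}/(2√π h a σ), one has for all x, y ∈ ℝ: K_{h²}(x,y) = Σ_{n=0}^∞ α β^n γ*_n(x) γ*_n(y), the series converging absolutely; that is, (α β^n, γ*_n) is a spectral decomposition of the normal kernel K_{h²} under the baseline measure N(0,σ²), with geometrically declining eigenvalues. -/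
open Real

/-- `w*(r) = 1 − (1/2)[√(4r + r²) − r]`. -/
noncomputable def wstar (r : ℝ) : ℝ :=
  1 - (1 / 2) * (Real.sqrt (4 * r + r ^ 2) - r)

/-!
With independent standard normals `Z`, `Z'`, the probabilists' Hermite polynomials are
`He_n(x) = 𝔼 (x + iZ)ⁿ`: by Stein's identity both sides satisfy the same three-term recursion.
Hence `∑ wⁿ/n! He_n(x) He_n(y) = 𝔼 exp(w (x + iZ)(y + iZ'))`, a Gaussian integral whose value is
Mehler's formula. Substituting `x ↦ cx` and multiplying by `exp(-b²(x² + y²)/2)` turns Mehler's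
kernel into `K_{h²}` for *every* `0 < w < 1`, with `b² = (1 - w)/h²` and
`c² = 2a² = (1 - w²)/(h²w)`. The resulting functions are orthonormal in `L²(N(0,σ²))` exactly when
`c² = 2b² + 1/σ²`, that is when `(1 - w)² = (h²/σ²) w`; the root of this equation in `(0, 1)` is
`w*`.
-/

open MeasureTheory ProbabilityTheory Polynomial
open scoped NNReal Nat

section Gaussian

variable {E : Type*} [NormedAddCommGroup E] [NormedSpace ℝ E]

theorem integrable_gaussianReal_iff {μ : ℝ} {v : ℝ≥0} (hv : v ≠ 0) {f : ℝ → E} :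
    Integrable f (gaussianReal μ v) ↔ Integrable fun x => gaussianPDFReal μ v x • f x := by
  rw [gaussianReal_of_var_ne_zero μ hv, integrable_withDensity_iff_integrable_smul'
    (measurable_gaussianPDF μ v) (ae_of_all _ fun _ => gaussianPDF_lt_top)]
  simp only [toReal_gaussianPDF]

theorem gaussianPDFReal_zero_one (x : ℝ) :
    gaussianPDFReal 0 1 x = (√(2 * π))⁻¹ * exp (-x ^ 2 / 2) := by
  simp [gaussianPDFReal]

theorem hasDerivAt_gaussianPDFReal (μ : ℝ) (v : ℝ≥0) (x : ℝ) :
    HasDerivAt (gaussianPDFReal μ v) (-((x - μ) / v) * gaussianPDFReal μ v x) x := by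
  have hquad : HasDerivAt (fun x : ℝ => -(x - μ) ^ 2 / (2 * v)) (-((x - μ) / v)) x :=
    ((((hasDerivAt_id x).sub_const μ).pow 2).neg.div_const _).congr_deriv (by
      simp only [id]; field_simp; simp [mul_comm])
  exact (hquad.exp.const_mul _).congr_deriv (by rw [gaussianPDFReal]; ring)

theorem stein_identity_gaussianReal {μ : ℝ} {v : ℝ≥0} {f f' : ℝ → E}
    (hderiv : ∀ x, HasDerivAt f (f' x) x) (hf : Integrable f (gaussianReal μ v))
    (hf' : Integrable f' (gaussianReal μ v))
    (hmul : Integrable (fun x => (x - μ) • f x) (gaussianReal μ v)) :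
    (v : ℝ) • ∫ x, f' x ∂gaussianReal μ v = ∫ x, (x - μ) • f x ∂gaussianReal μ v := by
  obtain rfl | hv := eq_or_ne v 0
  · have hzero : (fun x => (x - μ) • f x) =ᵐ[Measure.dirac μ] 0 := by
      simp [Filter.EventuallyEq, ae_dirac_eq]
    simp [integral_eq_zero_of_ae hzero]
  have hv' : (v : ℝ) ≠ 0 := by exact_mod_cast hv
  have hvf' : Integrable (fun x => (v : ℝ) • f' x) (gaussianReal μ v) := hf'.smul _
  rw [← integral_smul, ← sub_eq_zero, ← integral_sub hvf' hmul,
    integral_gaussianReal_eq_integral_smul hv]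
  refine integral_eq_zero_of_hasDerivAt_of_integrable
    (f := fun x => (v : ℝ) • gaussianPDFReal μ v x • f x) (fun x => ?_)
    ((integrable_gaussianReal_iff hv).mp (hvf'.sub hmul))
    (((integrable_gaussianReal_iff hv).mp hf).smul _)
  refine (((hasDerivAt_gaussianPDFReal μ v x).smul (hderiv x)).const_smul _).congr_deriv ?_
  match_scalars <;> field_simp

theorem integrable_eval_gaussianReal {A : Type*} [NormedRing A] [NormedAlgebra ℝ A]
    (p : A[X]) (μ : ℝ) (v : ℝ≥0) :
    Integrable (fun x => p.eval (algebraMap ℝ A x)) (gaussianReal μ v) := by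
  induction p using Polynomial.induction_on' with
  | add p q hp hq => simp only [eval_add]; exact hp.add hq
  | monomial n c =>
    have hpow : Integrable (fun x : ℝ => x ^ n) (gaussianReal μ v) :=
      integrable_pow_of_mem_interior_integrableExpSet (X := id) (by simp) n
    simpa using ((algebraMapCLM ℝ A).integrable_comp hpow).const_mul c

theorem integral_cexp_quadratic_gaussianReal {b : ℝ} (hb : b < 1 / 2) (c d : ℂ) :
    ∫ x : ℝ, Complex.exp (b * x ^ 2 + c * x + d) ∂gaussianReal 0 1 =
      (√(1 - 2 * b))⁻¹ * Complex.exp (d + c ^ 2 / (2 * (1 - 2 * b))) := by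
  have hpos : 0 < 1 - 2 * b := by linarith
  have hb' : ((b - 1 / 2 : ℝ) : ℂ).re < 0 := by rw [Complex.ofReal_re]; linarith
  have hscale : ((π : ℂ) / -((b - 1 / 2 : ℝ) : ℂ)) ^ (1 / 2 : ℂ) =
      ((√(2 * π) * (√(1 - 2 * b))⁻¹ : ℝ) : ℂ) := by
    rw [← sqrt_inv, ← sqrt_mul (by positivity), sqrt_eq_rpow, Complex.ofReal_cpow (by positivity)]
    congr 1
    · rw [← Complex.ofReal_neg, ← Complex.ofReal_div]
      congr 1
      rw [show -(b - 1 / 2) = (1 - 2 * b) / 2 by ring]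
      field_simp
    · simp
  have hpdf : ∀ x : ℝ, gaussianPDFReal 0 1 x • Complex.exp (b * x ^ 2 + c * x + d) =
      ((√(2 * π))⁻¹ : ℝ) * Complex.exp (((b - 1 / 2 : ℝ) : ℂ) * x ^ 2 + c * x + d) := fun x => by
    rw [gaussianPDFReal_zero_one, Complex.real_smul, Complex.ofReal_mul, Complex.ofReal_exp,
      mul_assoc, ← Complex.exp_add]
    push_cast
    ring_nf
  rw [integral_gaussianReal_eq_integral_smul one_ne_zero]
  simp only [hpdf]
  rw [integral_const_mul, integral_cexp_quadratic hb', hscale, ← mul_assoc, ← Complex.ofReal_mul,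
    inv_mul_cancel_left₀ (by positivity)]
  congr 3
  rw [show (4 : ℂ) * ((b - 1 / 2 : ℝ) : ℂ) = -(2 * (1 - 2 * b)) by push_cast; ring, div_neg,
    sub_neg_eq_add]

theorem integrable_exp_mul_sq_gaussianReal_s18 {b : ℝ} (hb : b < 1 / 2) :
    Integrable (fun x => exp (b * x ^ 2)) (gaussianReal 0 1) := by
  rw [integrable_gaussianReal_iff one_ne_zero]
  refine ((integrable_exp_neg_mul_sq (b := 1 / 2 - b) (by linarith)).const_mul (√(2 * π))⁻¹).congr
    (ae_of_all _ fun x => ?_)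
  simp only [gaussianPDFReal_zero_one, smul_eq_mul, mul_assoc, ← exp_add]
  ring_nf

end Gaussian

section Hermite

theorem derivative_hermite_succ (n : ℕ) :
    derivative (hermite (n + 1)) = (n + 1) * hermite n := by
  induction n with
  | zero => simp
  | succ n ih =>
    rw [hermite_succ (n + 1), derivative_sub, derivative_mul, ih, derivative_mul, hermite_succ n]
    simp only [derivative_X, one_mul, derivative_add, derivative_natCast, derivative_one, add_zero,
      zero_mul, zero_add, Nat.cast_add, Nat.cast_one]
    ring

theorem hermite_add_two (n : ℕ) :
    hermite (n + 2) = X * hermite (n + 1) - ((n : ℤ[X]) + 1) * hermite n := by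
  rw [hermite_succ (n + 1), derivative_hermite_succ]

theorem integrable_eval_mul_aeval_gaussianReal (p : ℝ[X]) (q : ℤ[X]) (μ : ℝ) (v : ℝ≥0) :
    Integrable (fun x => p.eval x * aeval x q) (gaussianReal μ v) := by
  have hint := integrable_eval_gaussianReal (p * q.map (algebraMap ℤ ℝ)) μ v
  simpa only [eval_mul, eval_map_algebraMap, Algebra.algebraMap_self, RingHom.id_apply] using hint

theorem integral_eval_mul_hermite_succ (p : ℝ[X]) (n : ℕ) :
    ∫ x, p.eval x * aeval x (hermite (n + 1)) ∂gaussianReal 0 1 =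
      ∫ x, (derivative p).eval x * aeval x (hermite n) ∂gaussianReal 0 1 := by
  have hint (p : ℝ[X]) (q : ℤ[X]) := integrable_eval_mul_aeval_gaussianReal p q 0 1
  have hX : Integrable (fun x => (x - 0) • (p.eval x * aeval x (hermite n)))
      (gaussianReal 0 1) := by
    have hXp := hint (X * p) (hermite n)
    simpa [mul_assoc] using hXp
  have hsum := (hint (derivative p) (hermite n)).add (hint p (derivative (hermite n)))
  have hstein := stein_identity_gaussianReal
    (f := fun x => p.eval x * aeval x (hermite n))
    (fun x => (p.hasDerivAt x).mul ((hermite n).hasDerivAt_aeval x)) (hint p (hermite n)) hsum hX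
  calc ∫ x, p.eval x * aeval x (hermite (n + 1)) ∂gaussianReal 0 1
      = ∫ x, (x - 0) • (p.eval x * aeval x (hermite n)) -
          p.eval x * aeval x (derivative (hermite n)) ∂gaussianReal 0 1 := by
        simp [hermite_succ, mul_sub, mul_left_comm]
    _ = ∫ x, (derivative p).eval x * aeval x (hermite n) ∂gaussianReal 0 1 := by
        rw [integral_sub hX (hint p _), ← hstein, NNReal.coe_one, one_smul,
          integral_add (hint _ _) (hint _ _), add_sub_cancel_right]

theorem integral_eval_mul_hermite (p : ℝ[X]) (n : ℕ) :
    ∫ x, p.eval x * aeval x (hermite n) ∂gaussianReal 0 1 =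
      ∫ x, (derivative^[n] p).eval x ∂gaussianReal 0 1 := by
  induction n generalizing p with
  | zero => simp
  | succ n ih => rw [integral_eval_mul_hermite_succ, ih, Function.iterate_succ_apply]

theorem iterate_derivative_hermite_self (n : ℕ) : derivative^[n] (hermite n) = n ! := by
  induction n with
  | zero => simp
  | succ n ih =>
    rw [Function.iterate_succ_apply, derivative_hermite_succ, ← Nat.cast_succ,
      iterate_derivative_natCast_mul, ih, Nat.factorial_succ, Nat.cast_mul]

theorem integral_hermite_mul_hermite (m n : ℕ) :
    ∫ x : ℝ, aeval x (hermite m) * aeval x (hermite n) ∂gaussianReal 0 1 =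
      if m = n then (n ! : ℝ) else 0 := by
  wlog hmn : m ≤ n generalizing m n
  · simp only [mul_comm (aeval _ (hermite m)), this n m (by lia), eq_comm (a := n)]
    split_ifs with h <;> simp [h]
  have hpair := integral_eval_mul_hermite ((hermite m).map (algebraMap ℤ ℝ)) n
  simp only [eval_map_algebraMap, iterate_derivative_map] at hpair
  rw [hpair]
  obtain rfl | hlt := hmn.eq_or_lt
  · simp [iterate_derivative_hermite_self]
  · simp [iterate_derivative_eq_zero (natDegree_hermite.trans_lt hlt), hlt.ne]

theorem integrable_add_I_mul_pow_gaussianReal (z : ℂ) (n : ℕ) :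
    Integrable (fun t : ℝ => (z + Complex.I * t) ^ n) (gaussianReal 0 1) := by
  have hint := integrable_eval_gaussianReal ((C z + C Complex.I * X) ^ n) 0 1
  simpa using hint

theorem integral_add_I_mul_pow_add_two (z : ℂ) (n : ℕ) :
    ∫ t : ℝ, (z + Complex.I * t) ^ (n + 2) ∂gaussianReal 0 1 =
      z * ∫ t : ℝ, (z + Complex.I * t) ^ (n + 1) ∂gaussianReal 0 1 -
        (n + 1) * ∫ t : ℝ, (z + Complex.I * t) ^ n ∂gaussianReal 0 1 := by
  have hpow := integrable_add_I_mul_pow_gaussianReal z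
  have hderiv (t : ℝ) : HasDerivAt (fun t : ℝ => (z + Complex.I * t) ^ (n + 1))
      ((n + 1) * Complex.I * (z + Complex.I * t) ^ n) t := by
    refine ((((Complex.ofRealCLM.hasDerivAt (x := t)).const_mul
      Complex.I).const_add z).pow (n + 1)).congr_deriv ?_
    simp only [Nat.cast_add, Nat.cast_one, Complex.ofRealCLM_apply, add_tsub_cancel_right,
      Complex.ofReal_one, mul_one]
    ring
  have hmul : Integrable (fun t : ℝ => (t - 0) • (z + Complex.I * t) ^ (n + 1))
      (gaussianReal 0 1) := by
    have hXpow := integrable_eval_gaussianReal (X * (C z + C Complex.I * X) ^ (n + 1)) 0 1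
    simpa using hXpow
  have hstein := stein_identity_gaussianReal hderiv (hpow (n + 1)) ((hpow n).const_mul _) hmul
  rw [integral_const_mul, NNReal.coe_one, one_smul] at hstein
  have hsplit (t : ℝ) : (z + Complex.I * t) ^ (n + 2) =
      z * (z + Complex.I * t) ^ (n + 1) +
        Complex.I * ((t - 0) • (z + Complex.I * t) ^ (n + 1)) := by
    simp only [sub_zero, Complex.real_smul]
    ring
  simp only [hsplit]
  rw [integral_add ((hpow _).const_mul _) (hmul.const_mul _), integral_const_mul,
    integral_const_mul, ← hstein]
  linear_combination (n + 1) * (∫ t : ℝ, (z + Complex.I * t) ^ n ∂gaussianReal 0 1) *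
    Complex.I_sq

theorem integral_add_I_mul_pow_gaussianReal (z : ℂ) (n : ℕ) :
    ∫ t : ℝ, (z + Complex.I * t) ^ n ∂gaussianReal 0 1 = aeval z (hermite n) := by
  induction n using Nat.twoStepInduction with
  | zero => simp
  | one =>
    have hid : ∫ t : ℝ, (t : ℂ) ∂gaussianReal 0 1 = 0 := by
      rw [integral_complex_ofReal, integral_id_gaussianReal, Complex.ofReal_zero]
    have hint : Integrable (fun t : ℝ => (t : ℂ)) (gaussianReal 0 1) := by
      simpa using integrable_eval_gaussianReal (X : ℂ[X]) 0 1
    simp only [pow_one, hermite_one, aeval_X]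
    rw [integral_add (integrable_const z) (hint.const_mul _), integral_const_mul, hid]
    simp
  | more n ih ih' =>
    rw [integral_add_I_mul_pow_add_two, ih, ih', hermite_add_two]
    simp

end Hermite

section Mehler

theorem norm_add_I_mul_sq (x s : ℝ) : ‖(x + Complex.I * s : ℂ)‖ ^ 2 = x ^ 2 + s ^ 2 := by
  rw [mul_comm, Complex.norm_add_mul_I, sq_sqrt (by positivity)]

variable {w : ℝ} (x y : ℝ)

theorem integrable_exp_abs_mul_norm_mul_norm (hw : |w| < 1) :
    Integrable (fun p : ℝ × ℝ =>
      exp (|w| * (‖(x + Complex.I * p.1 : ℂ)‖ * ‖(y + Complex.I * p.2 : ℂ)‖)))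
      ((gaussianReal 0 1).prod (gaussianReal 0 1)) := by
  have hint : Integrable (fun s : ℝ => exp (|w| / 2 * s ^ 2)) (gaussianReal 0 1) :=
    integrable_exp_mul_sq_gaussianReal_s18 (by linarith)
  refine ((hint.mul_prod hint).const_mul (exp (|w| / 2 * (x ^ 2 + y ^ 2)))).mono'
    (Continuous.aestronglyMeasurable (by fun_prop)) (ae_of_all _ fun p => ?_)
  rw [norm_of_nonneg (exp_pos _).le, ← exp_add, ← exp_add, exp_le_exp]
  have hamgm := two_mul_le_add_sq ‖(x + Complex.I * p.1 : ℂ)‖ ‖(y + Complex.I * p.2 : ℂ)‖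
  rw [norm_add_I_mul_sq, norm_add_I_mul_sq] at hamgm
  linear_combination |w| / 2 * hamgm

theorem integrable_cexp_mul_add_I_mul (hw : |w| < 1) :
    Integrable (fun p : ℝ × ℝ =>
      Complex.exp (w * ((x + Complex.I * p.1) * (y + Complex.I * p.2))))
      ((gaussianReal 0 1).prod (gaussianReal 0 1)) := by
  refine (integrable_exp_abs_mul_norm_mul_norm x y hw).mono'
    (Continuous.aestronglyMeasurable (by fun_prop)) (ae_of_all _ fun p => ?_)
  refine (Complex.norm_exp_le_exp_norm _).trans_eq ?_
  rw [norm_mul, norm_mul, Complex.norm_real, norm_eq_abs]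

theorem integral_cexp_mul_add_I_mul_gaussianReal (u z : ℂ) :
    ∫ t : ℝ, Complex.exp (u * (z + Complex.I * t)) ∂gaussianReal 0 1 =
      Complex.exp (u * z - u ^ 2 / 2) := by
  have hmgf : ∫ t : ℝ, Complex.exp (u * Complex.I * t) ∂gaussianReal 0 1 =
      Complex.exp (-u ^ 2 / 2) :=
    (complexMGF_id_gaussianReal (μ := 0) (v := 1) (u * Complex.I)).trans (by simp [mul_pow])
  simp only [mul_add, Complex.exp_add, ← mul_assoc]
  rw [integral_const_mul, hmgf, ← Complex.exp_add]
  ring_nf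

theorem integral_cexp_mul_add_I_mul (hw : |w| < 1) :
    ∫ p : ℝ × ℝ, Complex.exp (w * ((x + Complex.I * p.1) * (y + Complex.I * p.2)))
        ∂(gaussianReal 0 1).prod (gaussianReal 0 1) =
      ((√(1 - w ^ 2))⁻¹ *
        exp ((2 * w * x * y - w ^ 2 * (x ^ 2 + y ^ 2)) / (2 * (1 - w ^ 2))) : ℝ) := by
  have hw2 : w ^ 2 < 1 := (sq_lt_one_iff_abs_lt_one w).mpr hw
  have hne : (1 - w ^ 2 : ℂ) ≠ 0 := by exact_mod_cast (sub_pos.mpr hw2).ne'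
  have hinner (s : ℝ) :
      ∫ t : ℝ, Complex.exp (w * ((x + Complex.I * s) * (y + Complex.I * t))) ∂gaussianReal 0 1 =
        Complex.exp ((w ^ 2 / 2 : ℝ) * s ^ 2 + w * Complex.I * (y - w * x) * s +
          (w * x * y - w ^ 2 * x ^ 2 / 2)) := by
    simp only [← mul_assoc (w : ℂ)]
    rw [integral_cexp_mul_add_I_mul_gaussianReal]
    congr 1
    push_cast
    linear_combination (-w ^ 2 * s ^ 2 / 2 : ℂ) * Complex.I_sq
  rw [integral_prod _ (integrable_cexp_mul_add_I_mul x y hw)]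
  simp only [hinner]
  rw [integral_cexp_quadratic_gaussianReal (by linarith), mul_div_cancel₀ _ two_ne_zero]
  push_cast
  rw [mul_div_cancel₀ _ two_ne_zero]
  congr 2
  field_simp
  linear_combination (w ^ 2 * (y - w * x) ^ 2 : ℂ) * Complex.I_sq

theorem hasSum_mehler_hermite (hw : |w| < 1) :
    HasSum (fun n : ℕ => w ^ n / n ! * (aeval x (hermite n) * aeval y (hermite n)))
      ((√(1 - w ^ 2))⁻¹ *
        exp ((2 * w * x * y - w ^ 2 * (x ^ 2 + y ^ 2)) / (2 * (1 - w ^ 2)))) := by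
  rw [← Complex.hasSum_ofReal, ← integral_cexp_mul_add_I_mul x y hw]
  have hterm (n : ℕ) :
      ∫ p : ℝ × ℝ, (w ^ n / n ! : ℂ) * ((x + Complex.I * p.1) ^ n * (y + Complex.I * p.2) ^ n)
          ∂(gaussianReal 0 1).prod (gaussianReal 0 1) =
        ((w ^ n / n ! * (aeval x (hermite n) * aeval y (hermite n)) : ℝ) : ℂ) := by
    rw [integral_const_mul, integral_prod_mul (fun s : ℝ => (x + Complex.I * s : ℂ) ^ n)
      (fun t : ℝ => (y + Complex.I * t : ℂ) ^ n), integral_add_I_mul_pow_gaussianReal,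
      integral_add_I_mul_pow_gaussianReal]
    simp [← Complex.coe_algebraMap, aeval_algebraMap_apply]
  simp only [← hterm]
  refine hasSum_integral_of_dominated_convergence
    (fun n p => (|w| * (‖(x + Complex.I * p.1 : ℂ)‖ * ‖(y + Complex.I * p.2 : ℂ)‖)) ^ n / n !)
    (fun n => Continuous.aestronglyMeasurable (by fun_prop))
    (fun n => ae_of_all _ fun p => le_of_eq ?_)
    (ae_of_all _ fun p => summable_pow_div_factorial _) ?_ (ae_of_all _ fun p => ?_)
  · simp only [norm_mul, norm_div, norm_pow, Complex.norm_real, norm_eq_abs,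
      Complex.norm_natCast]
    ring
  · simp only [← congrFun NormedSpace.exp_eq_tsum_div, ← exp_eq_exp_ℝ]
    exact integrable_exp_abs_mul_norm_mul_norm x y hw
  · rw [Complex.exp_eq_exp_ℂ]
    refine (NormedSpace.expSeries_div_hasSum_exp _).congr_fun fun n => ?_
    simp only [mul_pow]
    ring

end Mehler

section NormalKernel

theorem hermiteH_eq_aeval_hermite (n : ℕ) (x : ℝ) :
    hermiteH n x = √2 ^ n * aeval (√2 * x) (hermite n) := by
  have hscale : (fun t : ℝ => exp (-t ^ 2)) = fun t => exp (-((√2 * t) ^ 2 / 2)) := by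
    ext t
    rw [mul_pow, sq_sqrt zero_le_two, mul_div_cancel_left₀ _ two_ne_zero]
  rw [hermiteH, hscale,
    iteratedDeriv_comp_const_mul (f := fun t => exp (-(t ^ 2 / 2))) (by fun_prop) √2,
    hermite_eq_deriv_gaussian', iteratedDeriv_eq_iterate, mul_pow √2 x, sq_sqrt zero_le_two,
    mul_div_cancel_left₀ _ two_ne_zero]
  ring

/-- The probabilists' Hermite polynomials, normalized to be orthonormal in `L²(N(0,1))`. -/
noncomputable def normHermite (n : ℕ) (x : ℝ) : ℝ :=
  aeval x (hermite n) / √(n ! : ℝ)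

theorem integral_normHermite_mul_normHermite (m n : ℕ) :
    ∫ x, normHermite m x * normHermite n x ∂gaussianReal 0 1 = if m = n then 1 else 0 := by
  simp only [normHermite, div_mul_div_comm]
  rw [integral_div, integral_hermite_mul_hermite]
  split_ifs with h
  · rw [h, mul_self_sqrt (by positivity), div_self (by positivity)]
  · rw [zero_div]

theorem hasSum_mehler_normHermite {w : ℝ} (hw : |w| < 1) (x y : ℝ) :
    HasSum (fun n => w ^ n * (normHermite n x * normHermite n y))
      ((√(1 - w ^ 2))⁻¹ *
        exp ((2 * w * x * y - w ^ 2 * (x ^ 2 + y ^ 2)) / (2 * (1 - w ^ 2)))) := by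
  refine (hasSum_mehler_hermite x y hw).congr_fun fun n => ?_
  rw [normHermite, normHermite, div_mul_div_comm, mul_self_sqrt (by positivity)]
  ring

/-- The functions `γ*_n` in terms of the probabilists' Hermite polynomials: the paper's `a` is
`c / √2`, and its parameters `b`, `c`, `σ` are left unrelated. -/
noncomputable def tiltedHermite (σ b c : ℝ) (n : ℕ) (x : ℝ) : ℝ :=
  √(c * σ) * exp (-b ^ 2 * x ^ 2 / 2) * normHermite n (c * x)

theorem tiltedHermite_sqrt_two_mul (σ a b : ℝ) (n : ℕ) (x : ℝ) :
    tiltedHermite σ b (√2 * a) n x = hermiteH n (a * x) * exp (-b ^ 2 * x ^ 2 / 2) *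
      √(a * σ / (2 ^ ((n : ℝ) - 1 / 2) * n !)) := by
  have hnorm : √(a * σ / (2 ^ ((n : ℝ) - 1 / 2) * n !)) =
      √(√2 * a * σ) / (√2 ^ n * √(n ! : ℝ)) := by
    have hpow : √((2 : ℝ) ^ n) = √2 ^ n := by
      rw [sqrt_eq_iff_mul_self_eq_of_pos (by positivity), ← mul_pow, mul_self_sqrt zero_le_two]
    rw [rpow_sub two_pos, rpow_natCast, ← sqrt_eq_rpow, div_mul_eq_mul_div, div_div_eq_mul_div,
      sqrt_div' _ (by positivity), sqrt_mul (by positivity : (0 : ℝ) ≤ 2 ^ n),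
      hpow, mul_comm (a * σ), ← mul_assoc]
  rw [tiltedHermite, normHermite, hermiteH_eq_aeval_hermite, hnorm]
  field_simp

section

variable {σ b c : ℝ}

theorem tiltedHermite_mul_tiltedHermite (hcσ : 0 ≤ c * σ) (m n : ℕ) (x y : ℝ) :
    tiltedHermite σ b c m x * tiltedHermite σ b c n y =
      c * σ * exp (-b ^ 2 * (x ^ 2 + y ^ 2) / 2) *
        (normHermite m (c * x) * normHermite n (c * y)) := by
  have hexp : exp (-b ^ 2 * (x ^ 2 + y ^ 2) / 2) =
      exp (-b ^ 2 * x ^ 2 / 2) * exp (-b ^ 2 * y ^ 2 / 2) := by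
    rw [← exp_add]
    ring_nf
  rw [tiltedHermite, tiltedHermite, hexp]
  linear_combination (exp (-b ^ 2 * x ^ 2 / 2) * exp (-b ^ 2 * y ^ 2 / 2) *
    (normHermite m (c * x) * normHermite n (c * y))) * mul_self_sqrt hcσ

theorem orthonormal_tiltedHermite (hσ : 0 < σ) (hc : 0 < c) (hbc : c ^ 2 = 2 * b ^ 2 + 1 / σ ^ 2)
    (m n : ℕ) :
    1 / (√(2 * π) * σ) * ∫ x, tiltedHermite σ b c m x * tiltedHermite σ b c n x *
      exp (-x ^ 2 / (2 * σ ^ 2)) = if m = n then 1 else 0 := by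
  have hsubst (x : ℝ) : tiltedHermite σ b c m x * tiltedHermite σ b c n x *
      exp (-x ^ 2 / (2 * σ ^ 2)) = c * σ * √(2 * π) *
        (gaussianPDFReal 0 1 (c * x) • (normHermite m (c * x) * normHermite n (c * x))) := by
    have hexp : exp (-(c * x) ^ 2 / 2) =
        exp (-b ^ 2 * (x ^ 2 + x ^ 2) / 2) * exp (-x ^ 2 / (2 * σ ^ 2)) := by
      rw [← exp_add, mul_pow, hbc]
      ring_nf
    rw [tiltedHermite_mul_tiltedHermite (by positivity), gaussianPDFReal_zero_one, hexp,
      smul_eq_mul]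
    field_simp
  simp only [hsubst]
  rw [integral_const_mul, Measure.integral_comp_mul_left
      (fun u => gaussianPDFReal 0 1 u • (normHermite m u * normHermite n u)),
    ← integral_gaussianReal_eq_integral_smul one_ne_zero, integral_normHermite_mul_normHermite,
    abs_of_pos (by positivity), smul_eq_mul]
  field_simp

theorem hasSum_tiltedHermite {w h : ℝ} (hw : 0 < w) (hw1 : w < 1) (hh : h ≠ 0)
    (hcσ : 0 ≤ c * σ) (hb : b ^ 2 = (1 - w) / h ^ 2) (hc : c ^ 2 = (1 - w ^ 2) / (h ^ 2 * w))
    (x y : ℝ) :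
    HasSum (fun n => w ^ n * (tiltedHermite σ b c n x * tiltedHermite σ b c n y))
      (c * σ / √(1 - w ^ 2) * exp (-(x - y) ^ 2 / (2 * h ^ 2))) := by
  have hw2 : 1 - w ^ 2 ≠ 0 := by nlinarith
  have hexp : exp (-(x - y) ^ 2 / (2 * h ^ 2)) = exp (-b ^ 2 * (x ^ 2 + y ^ 2) / 2) *
      exp ((2 * w * (c * x) * (c * y) - w ^ 2 * ((c * x) ^ 2 + (c * y) ^ 2)) /
        (2 * (1 - w ^ 2))) := by
    rw [← exp_add, show 2 * w * (c * x) * (c * y) - w ^ 2 * ((c * x) ^ 2 + (c * y) ^ 2) =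
      c ^ 2 * (2 * w * x * y - w ^ 2 * (x ^ 2 + y ^ 2)) by ring, neg_mul, hb, hc]
    congr 1
    field_simp
    ring
  have hmehler := (hasSum_mehler_normHermite (abs_lt.mpr ⟨by linarith, hw1⟩) (c * x)
    (c * y)).mul_left (c * σ * exp (-b ^ 2 * (x ^ 2 + y ^ 2) / 2))
  rw [hexp, div_eq_mul_inv, mul_assoc (c * σ), mul_left_comm _ (exp _), ← mul_assoc (c * σ)]
  refine hmehler.congr_fun fun n => ?_
  rw [tiltedHermite_mul_tiltedHermite hcσ]
  ring

end

section

variable {r : ℝ}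

theorem wstar_pos (hr : 0 ≤ r) : 0 < wstar r := by
  have : √(4 * r + r ^ 2) < r + 2 := (sqrt_lt' (by linarith)).mpr (by linarith)
  rw [wstar]
  linarith

theorem wstar_lt_one (hr : 0 < r) : wstar r < 1 := by
  have : r < √(4 * r + r ^ 2) := lt_sqrt_of_sq_lt (by linarith)
  rw [wstar]
  linarith

theorem one_sub_wstar_sq (hr : 0 ≤ r) : (1 - wstar r) ^ 2 = r * wstar r := by
  rw [wstar]
  linear_combination (1 / 4) * sq_sqrt (by positivity : 0 ≤ 4 * r + r ^ 2)

end

theorem one_sub_wstar_sq_div {h σ : ℝ} (hh : h ≠ 0) (hσ : σ ≠ 0) :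
    (1 - wstar (h ^ 2 / σ ^ 2) ^ 2) / (h ^ 2 * wstar (h ^ 2 / σ ^ 2)) =
      2 * ((1 - wstar (h ^ 2 / σ ^ 2)) / h ^ 2) + 1 / σ ^ 2 := by
  have hr : 0 ≤ h ^ 2 / σ ^ 2 := by positivity
  have hfix := one_sub_wstar_sq hr
  have hw := (wstar_pos hr).ne'
  generalize wstar (h ^ 2 / σ ^ 2) = w at hfix hw ⊢
  field_simp at hfix ⊢
  linear_combination hfix

theorem div_mul_div_eq_inv_sqrt_two_mul_pi_mul_sq {h a σ s : ℝ} (hh : 0 < h) (ha : a ≠ 0)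
    (hσ : σ ≠ 0) (hs : s ≠ 0) :
    s / (2 * √π * h * a * σ) * (√2 * a * σ / s) = (√(2 * π * h ^ 2))⁻¹ := by
  rw [sqrt_mul (by positivity), sqrt_sq hh.le, sqrt_mul zero_le_two]
  field_simp
  rw [sq_sqrt zero_le_two]

end NormalKernel

/-- spectral decomposition of the normal kernel `K_{h²}` under baseline
measure `N(0,σ²)`.  With `r = h²/σ²`, `w* = w*(r)`, `a = √((1−w*²)/(2h²w*))`,
`b = √((1−w*)/h²)`, `γ*_n(x) = H_n(ax) e^{−b²x²/2} √(aσ/(2^{n−1/2} n!))`,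
`β = w*` and `α = (1−w*²)^{1/2}/(2√π h a σ)`, the `γ*_n` are orthonormal in
`L²(N(0,σ²))` and `K_{h²}(x,y) = Σ_n α βⁿ γ*_n(x) γ*_n(y)`, converging absolutely. -/
theorem normal_kernel_spectral_decomposition (h σ : ℝ) (hh : 0 < h) (hσ : 0 < σ) :
    let w := wstar (h ^ 2 / σ ^ 2)
    let a := Real.sqrt ((1 - w ^ 2) / (2 * h ^ 2 * w))
    let b := Real.sqrt ((1 - w) / h ^ 2)
    let γ : ℕ → ℝ → ℝ := fun n x =>
      hermiteH n (a * x) * Real.exp (-b ^ 2 * x ^ 2 / 2) *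
        Real.sqrt (a * σ / ((2 : ℝ) ^ ((n : ℝ) - 1 / 2) * n.factorial))
    let α := Real.sqrt (1 - w ^ 2) / (2 * Real.sqrt Real.pi * h * a * σ)
    (∀ m n : ℕ,
        (1 / (Real.sqrt (2 * Real.pi) * σ)) *
            ∫ x : ℝ, γ m x * γ n x * Real.exp (-x ^ 2 / (2 * σ ^ 2))
          = if m = n then 1 else 0) ∧
    ∀ x y : ℝ,
      (Summable fun n : ℕ => |α * w ^ n * (γ n x * γ n y)|) ∧
      (∑' n : ℕ, α * w ^ n * (γ n x * γ n y))
        = (Real.sqrt (2 * Real.pi * h ^ 2))⁻¹ *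
            Real.exp (-(x - y) ^ 2 / (2 * h ^ 2)) := by
  intro w a b γ α
  have hr : 0 < h ^ 2 / σ ^ 2 := by positivity
  have hw : 0 < w := wstar_pos hr.le
  have hw1 : w < 1 := wstar_lt_one hr
  have hw2 : 0 < 1 - w ^ 2 := by nlinarith
  have ha : 0 < a := sqrt_pos.mpr (by positivity)
  have hb : b ^ 2 = (1 - w) / h ^ 2 := sq_sqrt (div_nonneg (by linarith) (by positivity))
  have hc : (√2 * a) ^ 2 = (1 - w ^ 2) / (h ^ 2 * w) := by
    rw [mul_pow, sq_sqrt zero_le_two, sq_sqrt (by positivity)]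
    field_simp
  have hbc : (√2 * a) ^ 2 = 2 * b ^ 2 + 1 / σ ^ 2 := by
    rw [hb, hc, one_sub_wstar_sq_div hh.ne' hσ.ne']
  have hγ : γ = tiltedHermite σ b (√2 * a) :=
    funext₂ fun n x => (tiltedHermite_sqrt_two_mul σ a b n x).symm
  have hα : α * (√2 * a * σ / √(1 - w ^ 2)) = (√(2 * π * h ^ 2))⁻¹ :=
    div_mul_div_eq_inv_sqrt_two_mul_pi_mul_sq hh ha.ne' hσ.ne' (sqrt_pos.mpr hw2).ne'
  rw [hγ, ← hα]
  refine ⟨orthonormal_tiltedHermite hσ (by positivity) hbc, fun x y => ?_⟩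
  have hsum := (hasSum_tiltedHermite (σ := σ) hw hw1 hh.ne' (by positivity) hb hc x y).mul_left α
  simp only [← mul_assoc α] at hsum
  exact ⟨hsum.summable.abs, hsum.tsum_eq⟩
end
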